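/- arXiv:1905.06433 — 6 statements merged into one kernel-verified Lean document; each statement's English description precedes it below -/
import Mathlib

section
/- Let n ≥ 1, let g : ℝⁿ → ℝ be continuous, let f : ℝⁿ → ℝ be integrable with f(x) > 0 for every x ∈ ℝⁿ, assume the product f·g is integrable, and let c₀ ≥ 0 satisfy |g(x)| ≥ c₀ for all x ∈ ℝⁿ. Then |∫_{ℝⁿ} f(x) g(x) dx| ≥ c₀ · ∫_{ℝⁿ} f(x) dx. -/
open MeasureTheory

theorem stmt_0 (n : ℕ) (hn : 1 ≤ n) (f g : (Fin n → ℝ) → ℝ)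
    (hg : Continuous g) (hf : Integrable f)
    (hfpos : ∀ x, 0 < f x)
    (hfg : Integrable (fun x => f x * g x))
    (c₀ : ℝ) (hc₀ : 0 ≤ c₀) (hgb : ∀ x, c₀ ≤ |g x|) :
    c₀ * ∫ x, f x ≤ |∫ x, f x * g x| := by
  rcases hc₀.eq_or_lt with h0 | hpos
  · rw [← h0, zero_mul]
    exact abs_nonneg _
  have hne : ∀ x, g x ≠ 0 := fun x hx => by
    have := hgb x
    rw [hx, abs_zero] at this
    linarith
  have hsign : (∀ x, 0 < g x) ∨ (∀ x, g x < 0) := by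
    by_contra hcon
    push Not at hcon
    obtain ⟨⟨a, ha⟩, b, hb⟩ := hcon
    obtain ⟨z, hz⟩ := mem_range_of_exists_le_of_exists_ge hg ⟨a, ha⟩ ⟨b, hb⟩
    exact hne z hz
  rw [← integral_const_mul]
  rcases hsign with h | h
  · refine le_trans ?_ (le_abs_self _)
    refine integral_mono (hf.const_mul c₀) hfg fun x => ?_
    have h1 := hgb x
    rw [abs_of_pos (h x)] at h1
    have h2 := hfpos x
    show c₀ * f x ≤ f x * g x
    nlinarith
  · refine le_trans ?_ (neg_le_abs _)
    rw [← integral_neg]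
    refine integral_mono (hf.const_mul c₀) hfg.neg fun x => ?_
    have h1 := hgb x
    rw [abs_of_neg (h x)] at h1
    have h2 := hfpos x
    show c₀ * f x ≤ -(f x * g x)
    nlinarith
end

section
/- Let k > 0 and t ∈ ℝ with t ≠ 0. Then the improper integral lim_{R→∞} ∫_{−R}^{R} e^{2πitx}/(x − ik) dx exists and equals 2πi·e^{−2πkt} if t > 0, and equals 0 if t < 0. -/
open MeasureTheory Real Filter

lemma aux_int_inv (c p q : ℝ) (hc : c ≠ 0) :
    ∫ x in p..q, 1 / ((x : ℂ) - c * Complex.I) =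
      (((1 / 2 * Real.log (q ^ 2 + c ^ 2) : ℝ) : ℂ) + (Real.arctan (q / c) : ℝ) * Complex.I)
      - (((1 / 2 * Real.log (p ^ 2 + c ^ 2) : ℝ) : ℂ) + (Real.arctan (p / c) : ℝ) * Complex.I) := by
  have hne : ∀ x : ℝ, (x : ℂ) - c * Complex.I ≠ 0 := by
    intro x h
    have := congrArg Complex.im h
    simp at this
    exact hc this
  have hpos : ∀ x : ℝ, x ^ 2 + c ^ 2 ≠ 0 := fun x => by positivity
  refine intervalIntegral.integral_eq_sub_of_hasDerivAt
    (f := fun x : ℝ => (((1 / 2 * Real.log (x ^ 2 + c ^ 2) : ℝ) : ℂ) +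
      (Real.arctan (x / c) : ℝ) * Complex.I)) ?_ ?_
  · intro x _
    have h1 : HasDerivAt (fun x : ℝ => 1 / 2 * Real.log (x ^ 2 + c ^ 2))
        (1 / 2 * ((2 * x) / (x ^ 2 + c ^ 2))) x := by
      have h0 : HasDerivAt (fun x : ℝ => x ^ 2 + c ^ 2) (2 * x) x := by
        simpa using (hasDerivAt_pow 2 x).add_const (c ^ 2)
      exact (h0.log (hpos x)).const_mul (1 / 2)
    have h2 : HasDerivAt (fun x : ℝ => Real.arctan (x / c))
        (1 / (1 + (x / c) ^ 2) * (1 / c)) x :=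
      ((hasDerivAt_id x).div_const c).arctan
    have h3 := h1.ofReal_comp.add (h2.ofReal_comp.mul_const Complex.I)
    refine HasDerivAt.congr_deriv (f := fun x : ℝ => (((1 / 2 * Real.log (x ^ 2 + c ^ 2) : ℝ) : ℂ) +
      (Real.arctan (x / c) : ℝ) * Complex.I)) h3 ?_
    symm
    have e2 : 1 / (1 + (x / c) ^ 2) * (1 / c) = c / (x ^ 2 + c ^ 2) := by
      have := hpos x
      have : c ^ 2 + x ^ 2 ≠ 0 := by rwa [add_comm]
      have : 1 + (x / c) ^ 2 ≠ 0 := by positivity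
      field_simp
      ring
    rw [e2]
    have e3 : ((x : ℂ) ^ 2 + c ^ 2) = (x - c * Complex.I) * (x + c * Complex.I) := by
      ring_nf; simp
    have h4 : ((x : ℂ) ^ 2 + c ^ 2) ≠ 0 := by exact_mod_cast hpos x
    rw [div_eq_iff (hne x)]
    push_cast
    field_simp
    ring_nf
    simp
  · apply Continuous.intervalIntegrable
    exact continuous_const.div (by fun_prop) hne

lemma aux_side (E : ℂ → ℂ) (hE : Continuous E) (p : ℂ) (γ : ℝ → ℂ) (hγ : Continuous γ)
    (h : ∀ x, γ x ≠ p) (u v : ℝ) :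
    ∫ x in u..v, dslope E p (γ x) =
      (∫ x in u..v, E (γ x) / (γ x - p)) - E p * ∫ x in u..v, 1 / (γ x - p) := by
  have hne : ∀ x, γ x - p ≠ 0 := fun x => sub_ne_zero.2 (h x)
  rw [← intervalIntegral.integral_const_mul, ← intervalIntegral.integral_sub]
  · apply intervalIntegral.integral_congr
    intro x _
    simp only
    rw [dslope_of_ne _ (h x), slope_def_field]
    ring
  · exact ((hE.comp hγ).div (by fun_prop) hne).intervalIntegrable _ _
  · exact (continuous_const.mul (continuous_const.div (by fun_prop) hne)).intervalIntegrable _ _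

lemma aux_decay (a R S : ℝ) (ha : 0 < a) (hS : 0 ≤ S) (hR : 0 < R) (f : ℝ → ℂ)
    (hf : ∀ y, ‖f y‖ ≤ Real.exp (-(a * y)) / R) :
    ‖∫ y in (0 : ℝ)..S, f y‖ ≤ 1 / (a * R) := by
  have h1 : ∫ y in (0 : ℝ)..S, Real.exp (-(a * y)) / R =
      (-(1 / (a * R)) * Real.exp (-(a * S))) - (-(1 / (a * R)) * Real.exp (-(a * 0))) := by
    refine intervalIntegral.integral_eq_sub_of_hasDerivAt
      (f := fun y => -(1 / (a * R)) * Real.exp (-(a * y))) ?_ ?_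
    · intro x _
      have : HasDerivAt (fun y : ℝ => -(a * y)) (-(a * 1)) x :=
        ((hasDerivAt_id x).const_mul a).neg
      refine (this.exp.const_mul (-(1 / (a * R)))).congr_deriv ?_
      field_simp
    · exact Continuous.intervalIntegrable (by fun_prop) _ _
  calc ‖∫ y in (0 : ℝ)..S, f y‖ ≤ ∫ y in (0 : ℝ)..S, Real.exp (-(a * y)) / R :=
        intervalIntegral.norm_integral_le_of_norm_le hS
          (Eventually.of_forall fun y _ => hf y)
          (Continuous.intervalIntegrable (by fun_prop) _ _)
    _ ≤ 1 / (a * R) := by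
        rw [h1]
        have : 0 ≤ 1 / (a * R) * Real.exp (-(a * S)) := by positivity
        simp only [mul_zero, neg_zero, Real.exp_zero]
        linarith

lemma aux_main (a c : ℝ) (ha : 0 < a) (hc : c ≠ 0) :
    Tendsto
      (fun R : ℝ => ∫ x in (-R)..R,
        Complex.exp (a * x * Complex.I) / ((x : ℂ) - c * Complex.I))
      atTop
      (nhds ((Real.exp (-(a * c)) : ℂ) *
        (2 * Complex.I * ((π / 2 : ℝ) + (if 0 < c then (π / 2 : ℝ) else (-(π / 2) : ℝ) : ℝ))))) := by
  set E : ℂ → ℂ := fun z => Complex.exp (a * z * Complex.I) with hEdef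
  have hEd : Differentiable ℂ E := by fun_prop
  have hEc : Continuous E := hEd.continuous
  set p : ℂ := c * Complex.I with hp
  have hEp : E p = (Real.exp (-(a * c)) : ℂ) := by
    simp only [hEdef, hp]
    push_cast
    congr 1
    ring_nf
    simp
  have hEn : ∀ x y : ℝ, ‖E (x + y * Complex.I)‖ = Real.exp (-(a * y)) := by
    intro x y
    simp [hEdef, Complex.norm_exp]
  have hg : Differentiable ℂ (dslope E p) := by
    rw [← differentiableOn_univ]
    exact (Complex.differentiableOn_dslope (by simp)).2 hEd.differentiableOn
  -- the sides
  set top : ℝ → ℂ := fun R => ∫ x in (-R)..R, E (x + (R + c : ℝ) * Complex.I) /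
    ((x + (R + c : ℝ) * Complex.I) - p) with htop
  set rt : ℝ → ℂ := fun R => ∫ y in (0 : ℝ)..(R + c), E ((R : ℝ) + y * Complex.I) /
    (((R : ℝ) + y * Complex.I) - p) with hrt
  set lt : ℝ → ℂ := fun R => ∫ y in (0 : ℝ)..(R + c), E ((-R : ℝ) + y * Complex.I) /
    (((-R : ℝ) + y * Complex.I) - p) with hlt
  have key : ∀ R : ℝ, |c| < R → (∫ x in (-R)..R, E x / ((x : ℂ) - p)) =
      E p * (2 * Complex.I * ((π / 2 : ℝ) + (Real.arctan (R / c) + Real.arctan (c / R) : ℝ))) +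
      (top R - Complex.I * rt R + Complex.I * lt R) := by
    intro R hR
    have hR0 : 0 < R := (abs_nonneg c).trans_lt hR
    have H := Complex.integral_boundary_rect_eq_zero_of_differentiableOn (dslope E p)
      (⟨-R, 0⟩ : ℂ) (⟨R, R + c⟩ : ℂ) hg.differentiableOn
    simp only at H
    rw [aux_side E hEc p (fun x : ℝ => (x : ℂ) + (0 : ℝ) * Complex.I) (by fun_prop)
        (by intro x h; have := congrArg Complex.im h; simp [hp] at this; exact hc this.symm),
      aux_side E hEc p (fun x : ℝ => (x : ℂ) + (R + c : ℝ) * Complex.I) (by fun_prop)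
        (by intro x h; have := congrArg Complex.im h; simp [hp] at this; exact hR0.ne' this),
      aux_side E hEc p (fun y : ℝ => ((R : ℝ) : ℂ) + y * Complex.I) (by fun_prop)
        (by intro x h; have := congrArg Complex.re h; simp [hp] at this; exact hR0.ne' this),
      aux_side E hEc p (fun y : ℝ => ((-R : ℝ) : ℂ) + y * Complex.I) (by fun_prop)
        (by intro x h; have := congrArg Complex.re h; simp [hp] at this; exact hR0.ne' this)] at H
    have b1 : ∫ x in (-R)..R, 1 / (((x : ℂ) + (0 : ℝ) * Complex.I) - p) =
        2 * Real.arctan (R / c) * Complex.I := by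
      have := aux_int_inv c (-R) R hc
      simp only [Complex.ofReal_zero, zero_mul, add_zero]
      rw [this, neg_div, Real.arctan_neg]
      push_cast
      ring_nf
    have b2 : ∫ x in (-R)..R, 1 / (((x : ℂ) + (R + c : ℝ) * Complex.I) - p) =
        - (2 * (π / 4 : ℝ) * Complex.I) := by
      have := aux_int_inv (-R) (-R) R (by linarith)
      have e : (fun x : ℝ => 1 / (((x : ℂ) + (R + c : ℝ) * Complex.I) - p)) =
          fun x : ℝ => 1 / ((x : ℂ) - ((-R : ℝ) : ℂ) * Complex.I) := by
        ext x; congr 1; simp only [hp]; push_cast; ring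
      rw [e, this]
      have e1 : R / -R = -1 := by field_simp
      have e2 : -R / -R = 1 := by field_simp
      rw [e1, e2, Real.arctan_neg, Real.arctan_one]
      push_cast
      ring_nf
    have hinv : ∀ r : ℝ, r ≠ 0 → ∫ y in (0 : ℝ)..(R + c), 1 / (((r : ℂ) + y * Complex.I) - p) =
        -Complex.I * ((((1 / 2 * Real.log (R ^ 2 + r ^ 2) : ℝ) : ℂ) + (Real.arctan (R / r) : ℝ) * Complex.I)
      - (((1 / 2 * Real.log ((-c) ^ 2 + r ^ 2) : ℝ) : ℂ) + (Real.arctan (-c / r) : ℝ) * Complex.I)) := by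
      intro r hr
      rw [← aux_int_inv r (-c) R hr]
      have e : (fun y : ℝ => 1 / (((r : ℂ) + y * Complex.I) - p)) =
          fun y : ℝ => -Complex.I * (fun x : ℝ => 1 / ((x : ℂ) - r * Complex.I)) (y - c) := by
        ext y
        simp only [hp]
        have e3 : (r : ℂ) + y * Complex.I - c * Complex.I =
          Complex.I * (((y - c : ℝ) : ℂ) - r * Complex.I) := by
          push_cast; ring_nf; simp
        rw [e3, one_div, mul_inv, Complex.inv_I, one_div]
      rw [e, intervalIntegral.integral_const_mul, intervalIntegral.integral_comp_sub_right
        (fun x : ℝ => 1 / ((x : ℂ) - r * Complex.I)) c]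
      simp
    rw [b1, b2, hinv R hR0.ne', hinv (-R) (by linarith)] at H
    have e1 : R / -R = -1 := by field_simp
    have e2 : R / R = 1 := by field_simp
    have e3 : -c / -R = c / R := by field_simp
    have e4 : -c / R = -(c / R) := by ring
    rw [e1, e2, e3, e4, Real.arctan_neg, Real.arctan_neg, Real.arctan_one, neg_sq R] at H
    simp only [Complex.ofReal_zero, zero_mul, add_zero, smul_eq_mul] at H
    simp only [htop, hrt, hlt]
    push_cast at H ⊢
    linear_combination H - E p * Complex.I *
      (π / 2 + 2 * Complex.arctan ((c : ℂ) / R)) * Complex.I_sq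
  have hden : ∀ w : ℂ, ∀ R : ℝ, 0 < R → (R ≤ |w.re| ∨ R ≤ |w.im|) → R ≤ ‖w‖ := by
    rintro w R _ (h | h)
    · exact h.trans (Complex.abs_re_le_norm w)
    · exact h.trans (Complex.abs_im_le_norm w)
  have hfrac : ∀ x y R : ℝ, 0 < R → (R ≤ |x| ∨ R ≤ |y - c|) →
      ‖E (x + y * Complex.I) / ((x + y * Complex.I) - p)‖ ≤ Real.exp (-(a * y)) / R := by
    intro x y R hR h
    rw [norm_div, hEn]
    gcongr
    apply hden _ _ hR
    simpa [hp] using h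
  have hinvlim : Tendsto (fun R : ℝ => 1 / (a * R)) atTop (nhds 0) := by
    simp only [one_div]
    exact tendsto_inv_atTop_zero.comp (tendsto_id.const_mul_atTop ha)
  have trt : Tendsto rt atTop (nhds 0) := by
    apply squeeze_zero_norm' _ hinvlim
    filter_upwards [eventually_gt_atTop |c|] with R hR
    have hR0 : 0 < R := (abs_nonneg c).trans_lt hR
    apply aux_decay a R _ ha (by linarith [neg_abs_le c]) hR0
    intro y
    exact hfrac R y R hR0 (Or.inl (le_abs_self R))
  have tlt : Tendsto lt atTop (nhds 0) := by
    apply squeeze_zero_norm' _ hinvlim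
    filter_upwards [eventually_gt_atTop |c|] with R hR
    have hR0 : 0 < R := (abs_nonneg c).trans_lt hR
    apply aux_decay a R _ ha (by linarith [neg_abs_le c]) hR0
    intro y
    exact hfrac (-R) y R hR0 (Or.inl (by rw [abs_neg]; exact le_abs_self R))
  have ttop : Tendsto top atTop (nhds 0) := by
    have hl : Tendsto (fun R : ℝ => 2 * Real.exp (-(a * (R + c)))) atTop (nhds 0) := by
      have : Tendsto (fun R : ℝ => a * (R + c)) atTop atTop :=
        (tendsto_atTop_add_const_right _ c tendsto_id).const_mul_atTop ha
      simpa using (Real.tendsto_exp_neg_atTop_nhds_zero.comp this).const_mul 2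
    apply squeeze_zero_norm' _ hl
    filter_upwards [eventually_gt_atTop |c|] with R hR
    have hR0 : 0 < R := (abs_nonneg c).trans_lt hR
    have := intervalIntegral.norm_integral_le_of_norm_le_const (a := -R) (b := R)
      (f := fun x : ℝ => E (x + (R + c : ℝ) * Complex.I) / ((x + (R + c : ℝ) * Complex.I) - p))
      (C := Real.exp (-(a * (R + c))) / R)
      (fun x _ => hfrac x (R + c) R hR0 (Or.inr (by simp [le_abs_self])))
    refine this.trans (le_of_eq ?_)
    rw [abs_of_pos (by linarith)]
    field_simp
    ring
  have tat : Tendsto (fun R : ℝ => Real.arctan (R / c) + Real.arctan (c / R)) atTop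
      (nhds (if 0 < c then (π / 2 : ℝ) else (-(π / 2) : ℝ))) := by
    have h2 : Tendsto (fun R : ℝ => Real.arctan (c / R)) atTop (nhds 0) := by
      have := (Real.continuous_arctan.tendsto 0).comp (tendsto_id.const_div_atTop c)
      simpa [Function.comp_def] using this
    rw [← add_zero (if 0 < c then (π / 2 : ℝ) else (-(π / 2) : ℝ))]
    refine Tendsto.add ?_ h2
    split_ifs with h
    · exact (tendsto_nhds_of_tendsto_nhdsWithin Real.tendsto_arctan_atTop).comp
        (tendsto_id.atTop_div_const h)
    · have h' : c < 0 := lt_of_le_of_ne (not_lt.1 h) hc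
      exact (tendsto_nhds_of_tendsto_nhdsWithin Real.tendsto_arctan_atBot).comp
        (tendsto_id.atTop_div_const_of_neg h')
  rw [← hEp]
  have L : Tendsto (fun R : ℝ => E p * (2 * Complex.I *
      ((π / 2 : ℝ) + (Real.arctan (R / c) + Real.arctan (c / R) : ℝ))) +
      (top R - Complex.I * rt R + Complex.I * lt R)) atTop
      (nhds (E p * (2 * Complex.I * ((π / 2 : ℝ) +
        (if 0 < c then (π / 2 : ℝ) else (-(π / 2) : ℝ) : ℝ))) +
        (0 - Complex.I * 0 + Complex.I * 0))) := by
    refine Tendsto.add ?_ ((ttop.sub (trt.const_mul _)).add (tlt.const_mul _))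
    exact (((Complex.continuous_ofReal.tendsto _).comp tat).const_add _ |>.const_mul _).const_mul _
  have L' := L.congr' (by
    filter_upwards [eventually_gt_atTop |c|] with R hR using (key R hR).symm)
  simpa using L'

theorem stmt_2 (k t : ℝ) (hk : 0 < k) (ht : t ≠ 0) :
    Tendsto
      (fun R : ℝ => ∫ x in (-R)..R,
        Complex.exp (2 * π * t * x * Complex.I) / ((x : ℂ) - k * Complex.I))
      atTop
      (nhds (if 0 < t then 2 * π * Complex.I * (Real.exp (-(2 * π * k * t)) : ℂ) else 0)) := by
  split_ifs with h
  · have := aux_main (2 * π * t) k (by positivity) hk.ne'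
    rw [if_pos hk] at this
    convert this using 2
    · push_cast; rfl
    · rw [show 2 * π * k * t = 2 * π * t * k by ring]
      push_cast
      ring
  · have h' : t < 0 := lt_of_le_of_ne (not_lt.1 h) ht
    have := (aux_main (2 * π * (-t)) (-k) (by have : 0 < -t := by linarith
                                              positivity) (by linarith)).neg
    rw [if_neg (by linarith)] at this
    convert this using 2 with R
    · rw [← intervalIntegral.integral_neg]
      have e := intervalIntegral.integral_comp_neg (a := -R) (b := R)
        (fun x : ℝ => Complex.exp (2 * π * t * x * Complex.I) / ((x : ℂ) - k * Complex.I))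
      rw [neg_neg] at e
      rw [← e]
      apply intervalIntegral.integral_congr
      intro x _
      simp only
      rw [← div_neg]
      push_cast
      congr 1
      · congr 1; ring
      · ring
    · simp
end

section
/- Let η : ℝ → ℂ be a smooth (C^∞) function with support contained in [−2, 2]. There exists a constant C > 0 (depending only on η) such that for every a ≥ 0 and every τ ≠ 0, the function θ_a(t) = η(t)·e^{2a·min(t,0)} satisfies both |∫_ℝ e^{−itτ} θ_a(t) dt| ≤ C/|τ| and |∫_ℝ e^{−itτ} θ_a(t) dt| ≤ C(1 + a)/τ². -/
open MeasureTheory Real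

lemma aux_ibp (g g' : ℝ → ℂ) (hg : ∀ x, HasDerivAt g (g' x) x) (hg' : Continuous g')
    (z : ℂ) (hz : z ≠ 0) (b c : ℝ) :
    ∫ s in b..c, g s * Complex.exp (z * s) =
      (g c * Complex.exp (z * c) - g b * Complex.exp (z * b)
        - ∫ s in b..c, g' s * Complex.exp (z * s)) / z := by
  have hv : ∀ x : ℝ, HasDerivAt (fun s : ℝ => Complex.exp (z * s) / z) (Complex.exp (z * x)) x := by
    intro x
    have h1 : HasDerivAt (fun s : ℝ => z * (s : ℂ)) z x := by
      simpa using (Complex.ofRealCLM.hasDerivAt (x := x)).const_mul z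
    have h2 := h1.cexp.div_const z
    rwa [mul_div_cancel_right₀ _ hz] at h2
  have := intervalIntegral.integral_mul_deriv_eq_deriv_mul (a := b) (b := c)
    (u := g) (u' := g') (v := fun s : ℝ => Complex.exp (z * s) / z)
    (v' := fun s : ℝ => Complex.exp (z * s)) (fun x _ => hg x) (fun x _ => hv x)
    (hg'.intervalIntegrable _ _) (Continuous.intervalIntegrable (by fun_prop) _ _)
  rw [this]
  have h3 : ∫ s in b..c, g' s * (Complex.exp (z * s) / z)
      = (∫ s in b..c, g' s * Complex.exp (z * s)) / z := by
    rw [← intervalIntegral.integral_div]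
    congr 1; ext s; ring
  rw [h3]; ring

lemma aux_bd (h : ℝ → ℂ) (M : ℝ) (hM : ∀ s ∈ Set.Icc (-3 : ℝ) 3, ‖h s‖ ≤ M) (z : ℂ)
    (b c : ℝ) (hbc : b ≤ c) (hl : c - b = 3) (hb : -3 ≤ b) (hc : c ≤ 3)
    (hz : ∀ s ∈ Set.Icc b c, z.re * s ≤ 0) :
    ‖∫ s in b..c, h s * Complex.exp (z * s)‖ ≤ 3 * M := by
  have := intervalIntegral.norm_integral_le_of_norm_le_const (a := b) (b := c) (C := M)
    (f := fun s : ℝ => h s * Complex.exp (z * s)) (by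
      intro s hs
      rw [Set.uIoc_of_le hbc] at hs
      have h1 := hM s ⟨by linarith [hs.1], by linarith [hs.2]⟩
      have h2 := hz s ⟨hs.1.le, hs.2⟩
      rw [norm_mul, Complex.norm_exp]
      have h3 : Real.exp (z * s).re ≤ 1 := by
        rw [Real.exp_le_one_iff]; simpa using h2
      calc _ ≤ ‖h s‖ * 1 := by gcongr
        _ ≤ M := by linarith)
  rw [hl] at this
  norm_num at this
  linarith

theorem stmt_4 (η : ℝ → ℂ) (hη : ContDiff ℝ (⊤ : ℕ∞) η)
    (hsupp : Function.support η ⊆ Set.Icc (-2) 2) :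
    ∃ C : ℝ, 0 < C ∧ ∀ a : ℝ, 0 ≤ a → ∀ τ : ℝ, τ ≠ 0 →
      ‖∫ s : ℝ, Complex.exp (-(s * τ) * Complex.I) *
          (η s * (Real.exp (2 * a * min s 0) : ℂ))‖ ≤ C / |τ| ∧
      ‖∫ s : ℝ, Complex.exp (-(s * τ) * Complex.I) *
          (η s * (Real.exp (2 * a * min s 0) : ℂ))‖ ≤ C * (1 + a) / τ ^ 2 := by
  have hη1 : ContDiff ℝ (⊤ : ℕ∞) (deriv η) := by
    exact ((contDiff_infty_iff_deriv (f := η)).1 hη).2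
  have hη2 : ContDiff ℝ (⊤ : ℕ∞) (deriv (deriv η)) :=
    ((contDiff_infty_iff_deriv (f := deriv η)).1 hη1).2
  have hd0 : ∀ x, HasDerivAt η (deriv η x) x := fun x =>
    (hη.differentiable (by simp) x).hasDerivAt
  have hd1 : ∀ x, HasDerivAt (deriv η) (deriv (deriv η) x) x := fun x =>
    (hη1.differentiable (by simp) x).hasDerivAt
  have hts : tsupport η ⊆ Set.Icc (-2) 2 := closure_minimal hsupp isClosed_Icc
  have hz0 : ∀ x, x ∉ Set.Icc (-2 : ℝ) 2 → η x = 0 := fun x hx => by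
    by_contra h; exact hx (hsupp h)
  have hz1 : ∀ x, x ∉ Set.Icc (-2 : ℝ) 2 → deriv η x = 0 := fun x hx => by
    by_contra h; exact hx (hts (support_deriv_subset h))
  have m3 : (-3 : ℝ) ∉ Set.Icc (-2 : ℝ) 2 := by norm_num
  have p3 : (3 : ℝ) ∉ Set.Icc (-2 : ℝ) 2 := by norm_num
  obtain ⟨M0, hM0⟩ := (isCompact_Icc (a := (-3 : ℝ)) (b := 3)).exists_bound_of_continuousOn
    hη.continuous.continuousOn
  obtain ⟨M1, hM1⟩ := (isCompact_Icc (a := (-3 : ℝ)) (b := 3)).exists_bound_of_continuousOn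
    hη1.continuous.continuousOn
  obtain ⟨M2, hM2⟩ := (isCompact_Icc (a := (-3 : ℝ)) (b := 3)).exists_bound_of_continuousOn
    hη2.continuous.continuousOn
  have k0 := hM0 0 (by norm_num)
  have k1 := hM1 0 (by norm_num)
  have n0 := (norm_nonneg _).trans k0
  have n1 := (norm_nonneg _).trans k1
  have n2 := (norm_nonneg _).trans (hM2 0 (by norm_num))
  refine ⟨2 * M0 + 8 * M1 + 6 * M2 + 1, by positivity, ?_⟩
  intro a ha τ hτ
  have hτ' : 0 < |τ| := abs_pos.2 hτ
  obtain ⟨w, hw⟩ : ∃ w : ℂ, w = -(τ : ℂ) * Complex.I := ⟨_, rfl⟩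
  obtain ⟨z, hz⟩ : ∃ z : ℂ, z = 2 * (a : ℂ) + w := ⟨_, rfl⟩
  have hwre : w.re = 0 := by simp [hw]
  have hwim : w.im = -τ := by simp [hw]
  have hzre : z.re = 2 * a := by simp [hz, hwre]
  have hzim : z.im = -τ := by simp [hz, hwim]
  have hwn : |τ| ≤ ‖w‖ := by simpa [hwim] using Complex.abs_im_le_norm w
  have hzn : |τ| ≤ ‖z‖ := by simpa [hzim] using Complex.abs_im_le_norm z
  have hw0 : w ≠ 0 := norm_pos_iff.1 (hτ'.trans_le hwn)
  have hzz : z ≠ 0 := norm_pos_iff.1 (hτ'.trans_le hzn)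
  have hsplit : ∫ s : ℝ, Complex.exp (-(s * τ) * Complex.I) *
          (η s * (Real.exp (2 * a * min s 0) : ℂ))
      = (∫ s in (-3:ℝ)..0, η s * Complex.exp (z * s))
        + ∫ s in (0:ℝ)..3, η s * Complex.exp (w * s) := by
    have hcη := hη.continuous
    have e1 : ∫ s in (-3:ℝ)..0, η s * Complex.exp (z * s)
       = ∫ s in (-3:ℝ)..0, Complex.exp (-(s * τ) * Complex.I) *
          (η s * (Real.exp (2 * a * min s 0) : ℂ)) := by
      apply intervalIntegral.integral_congr
      intro s hs
      rw [Set.uIcc_of_le (by norm_num)] at hs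
      simp only [min_eq_left hs.2]
      rw [mul_left_comm, Complex.ofReal_exp, ← Complex.exp_add, hz, hw]
      congr 2; push_cast; ring
    have e2 : ∫ s in (0:ℝ)..3, η s * Complex.exp (w * s)
       = ∫ s in (0:ℝ)..3, Complex.exp (-(s * τ) * Complex.I) *
          (η s * (Real.exp (2 * a * min s 0) : ℂ)) := by
      apply intervalIntegral.integral_congr
      intro s hs
      rw [Set.uIcc_of_le (by norm_num)] at hs
      simp only [min_eq_right hs.1]
      rw [mul_left_comm, Complex.ofReal_exp, ← Complex.exp_add, hw]
      congr 2; push_cast; ring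
    rw [e1, e2, intervalIntegral.integral_add_adjacent_intervals
      (Continuous.intervalIntegrable (by fun_prop) _ _)
      (Continuous.intervalIntegrable (by fun_prop) _ _)]
    symm
    apply intervalIntegral.integral_eq_integral_of_support_subset
    intro s hs
    by_contra hn
    apply hs
    have : η s = 0 := hz0 s (fun h => hn ⟨by linarith [h.1], by linarith [h.2]⟩)
    simp [this]
  have hA := aux_ibp η _ hd0 hη1.continuous z hzz (-3) 0
  have hB := aux_ibp η _ hd0 hη1.continuous w hw0 0 3
  have hA' := aux_ibp _ _ hd1 hη2.continuous z hzz (-3) 0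
  have hB' := aux_ibp _ _ hd1 hη2.continuous w hw0 0 3
  have sz : ∀ s ∈ Set.Icc (-3:ℝ) 0, z.re * s ≤ 0 := fun s hs => by
    rw [hzre]; nlinarith [hs.2]
  have sw : ∀ s ∈ Set.Icc (0:ℝ) 3, w.re * s ≤ 0 := fun s hs => by simp [hwre]
  have bA := aux_bd _ _ hM1 z (-3) 0 (by norm_num) (by norm_num) (by norm_num) (by norm_num) sz
  have bB := aux_bd _ _ hM1 w 0 3 (by norm_num) (by norm_num) (by norm_num) (by norm_num) sw
  have bA' := aux_bd _ _ hM2 z (-3) 0 (by norm_num) (by norm_num) (by norm_num) (by norm_num) sz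
  have bB' := aux_bd _ _ hM2 w 0 3 (by norm_num) (by norm_num) (by norm_num) (by norm_num) sw
  rw [hz0 _ m3] at hA
  rw [hz0 _ p3] at hB
  rw [hz1 _ m3] at hA'
  rw [hz1 _ p3] at hB'
  simp only [Complex.ofReal_zero, mul_zero, Complex.exp_zero, mul_one, zero_mul, sub_zero,
    zero_sub] at hA hB hA' hB'
  rw [hsplit, hA, hB]
  generalize (∫ s in (-3:ℝ)..0, deriv η s * Complex.exp (z * s)) = I1 at *
  generalize (∫ s in (0:ℝ)..3, deriv η s * Complex.exp (w * s)) = I2 at *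
  generalize (∫ s in (-3:ℝ)..0, deriv (deriv η) s * Complex.exp (z * s)) = J1 at *
  generalize (∫ s in (0:ℝ)..3, deriv (deriv η) s * Complex.exp (w * s)) = J2 at *
  have dv : ∀ (x y : ℂ) (B : ℝ), ‖x‖ ≤ B → |τ| ≤ ‖y‖ → ‖x / y‖ ≤ B / |τ| := by
    intro x y B hx hy
    rw [norm_div]
    have := (norm_nonneg _).trans hx
    gcongr
  constructor
  · have q1 := dv (η 0 - I1) z (M0 + 3 * M1) ((norm_sub_le _ _).trans (by linarith)) hzn
    have q2 := dv (-η 0 - I2) w (M0 + 3 * M1)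
      ((norm_sub_le _ _).trans (by rw [norm_neg]; linarith)) hwn
    calc _ ≤ (M0 + 3 * M1) / |τ| + (M0 + 3 * M1) / |τ| :=
          (norm_add_le _ _).trans (add_le_add q1 q2)
      _ = (2 * M0 + 6 * M1) / |τ| := by ring
      _ ≤ _ := by apply div_le_div_of_nonneg_right _ hτ'.le; linarith
  · have q1 : ‖I1‖ ≤ (M1 + 3 * M2) / |τ| := by
      rw [hA']; exact dv _ z _ ((norm_sub_le _ _).trans (by linarith)) hzn
    have q2 : ‖I2‖ ≤ (M1 + 3 * M2) / |τ| := by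
      rw [hB']; exact dv _ w _ ((norm_sub_le _ _).trans (by rw [norm_neg]; linarith)) hwn
    have r1 := dv I1 z _ q1 hzn
    have r2 := dv I2 w _ q2 hwn
    have r3 : ‖(-(2 * a) * η 0) / w / z‖ ≤ 2 * a * M0 / |τ| / |τ| := by
      apply dv _ _ _ _ hzn
      apply dv _ _ _ _ hwn
      rw [norm_mul, norm_neg, norm_mul, Complex.norm_real, Real.norm_of_nonneg ha]
      norm_num
      gcongr
    have e : (η 0 - I1) / z + (-η 0 - I2) / w
        = (-(2 * a) * η 0) / w / z - I1 / z - I2 / w := by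
      have : (2 * a : ℂ) = z - w := by rw [hz]; ring
      rw [this]; field_simp; ring
    rw [e, ← sq_abs τ]
    calc _ ≤ 2 * a * M0 / |τ| / |τ| + (M1 + 3 * M2) / |τ| / |τ| + (M1 + 3 * M2) / |τ| / |τ| :=
          (norm_sub_le _ _).trans (add_le_add ((norm_sub_le _ _).trans (add_le_add r3 r1)) r2)
      _ = (2 * a * M0 + 2 * M1 + 6 * M2) / |τ| ^ 2 := by field_simp; ring
      _ ≤ _ := by
        gcongr
        have := mul_nonneg ha n1
        have := mul_nonneg ha n2
        nlinarith
end

section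
/- Let N ≥ 1 and let ξ ∈ ℝ with |ξ| ≤ 1/2. Then: (i) the set K = {ξ₁ ∈ ℝ : ξ₁ ∈ [−N−2, −N] and ξ − ξ₁ ∈ [N, N+2]} has Lebesgue measure 2 − |ξ| ≥ 3/2; (ii) for every ξ₁ ∈ K one has 3N²|ξ| ≤ |3ξ·ξ₁·(ξ − ξ₁)| ≤ 3(N+2)²|ξ|; and (iii) for every p > 0 and every ξ₁ ∈ K one has N^p ≤ |ξ₁|^p + |ξ − ξ₁|^p − |ξ|^p ≤ 2(N+2)^p. -/
open MeasureTheory Real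

theorem stmt_10 (N ξ : ℝ) (hN : 1 ≤ N) (hξ : |ξ| ≤ 1 / 2) :
    (volume {ξ₁ : ℝ | ξ₁ ∈ Set.Icc (-N - 2) (-N) ∧ ξ - ξ₁ ∈ Set.Icc N (N + 2)} =
        ENNReal.ofReal (2 - |ξ|) ∧ (3 : ℝ) / 2 ≤ 2 - |ξ|) ∧
    (∀ ξ₁ ∈ {ξ₁ : ℝ | ξ₁ ∈ Set.Icc (-N - 2) (-N) ∧ ξ - ξ₁ ∈ Set.Icc N (N + 2)},
      3 * N ^ 2 * |ξ| ≤ |3 * ξ * ξ₁ * (ξ - ξ₁)| ∧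
      |3 * ξ * ξ₁ * (ξ - ξ₁)| ≤ 3 * (N + 2) ^ 2 * |ξ|) ∧
    (∀ p : ℝ, 0 < p →
      ∀ ξ₁ ∈ {ξ₁ : ℝ | ξ₁ ∈ Set.Icc (-N - 2) (-N) ∧ ξ - ξ₁ ∈ Set.Icc N (N + 2)},
        N ^ p ≤ |ξ₁| ^ p + |ξ - ξ₁| ^ p - |ξ| ^ p ∧
        |ξ₁| ^ p + |ξ - ξ₁| ^ p - |ξ| ^ p ≤ 2 * (N + 2) ^ p) := by
  have key : ∀ ξ₁ ∈ {ξ₁ : ℝ | ξ₁ ∈ Set.Icc (-N - 2) (-N) ∧ ξ - ξ₁ ∈ Set.Icc N (N + 2)},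
      (N ≤ |ξ₁| ∧ |ξ₁| ≤ N + 2) ∧ (N ≤ |ξ - ξ₁| ∧ |ξ - ξ₁| ≤ N + 2) := by
    rintro x ⟨⟨h1, h2⟩, h3, h4⟩
    rw [abs_of_nonpos (by linarith : x ≤ 0), abs_of_nonneg (by linarith : 0 ≤ ξ - x)]
    refine ⟨⟨?_, ?_⟩, ?_, ?_⟩ <;> linarith
  refine ⟨⟨?_, by linarith⟩, ?_, ?_⟩
  · rcases le_total 0 ξ with h | h
    · have : {ξ₁ : ℝ | ξ₁ ∈ Set.Icc (-N - 2) (-N) ∧ ξ - ξ₁ ∈ Set.Icc N (N + 2)}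
          = Set.Icc (ξ - N - 2) (-N) := by
        ext x
        simp only [Set.mem_setOf_eq, Set.mem_Icc]
        constructor
        · rintro ⟨⟨h1, h2⟩, h3, h4⟩
          constructor <;> linarith
        · rintro ⟨h1, h2⟩
          refine ⟨⟨?_, ?_⟩, ?_, ?_⟩ <;> linarith
      rw [this, Real.volume_Icc, abs_of_nonneg h]
      congr 1
      ring
    · have : {ξ₁ : ℝ | ξ₁ ∈ Set.Icc (-N - 2) (-N) ∧ ξ - ξ₁ ∈ Set.Icc N (N + 2)}
          = Set.Icc (-N - 2) (ξ - N) := by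
        ext x
        simp only [Set.mem_setOf_eq, Set.mem_Icc]
        constructor
        · rintro ⟨⟨h1, h2⟩, h3, h4⟩
          constructor <;> linarith
        · rintro ⟨h1, h2⟩
          refine ⟨⟨?_, ?_⟩, ?_, ?_⟩ <;> linarith
      rw [this, Real.volume_Icc, abs_of_nonpos h]
      congr 1
      ring
  · intro x hx
    obtain ⟨⟨h1, h2⟩, h3, h4⟩ := key x hx
    have e : |3 * ξ * x * (ξ - x)| = 3 * (|x| * |ξ - x|) * |ξ| := by
      rw [abs_mul, abs_mul, abs_mul, abs_of_pos (by norm_num : (0 : ℝ) < 3)]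
      ring
    have hl : N ^ 2 ≤ |x| * |ξ - x| := by
      rw [sq]
      exact mul_le_mul h1 h3 (by linarith) (by positivity)
    have hu : |x| * |ξ - x| ≤ (N + 2) ^ 2 := by
      rw [sq]
      exact mul_le_mul h2 h4 (by positivity) (by linarith)
    rw [e]
    constructor <;> gcongr
  · intro p hp x hx
    obtain ⟨⟨h1, h2⟩, h3, h4⟩ := key x hx
    have hN0 : 0 ≤ N := by linarith
    have a1 := Real.rpow_le_rpow hN0 h1 hp.le
    have a2 := Real.rpow_le_rpow (abs_nonneg x) h2 hp.le
    have a3 : |ξ| ^ p ≤ |ξ - x| ^ p :=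
      Real.rpow_le_rpow (abs_nonneg ξ) (by linarith) hp.le
    have a4 := Real.rpow_le_rpow (abs_nonneg (ξ - x)) h4 hp.le
    have a5 := Real.rpow_nonneg (abs_nonneg ξ) p
    constructor <;> linarith
end

section
/- Let p > 0, t > 0 and γ ∈ (0, 1/2]. For N ≥ 1 and ξ ∈ ℝ set K_{N,ξ} = {ξ₁ ∈ ℝ : (ξ₁ ∈ [−N−2,−N] and ξ−ξ₁ ∈ [N,N+2]) or (ξ₁ ∈ [N,N+2] and ξ−ξ₁ ∈ [−N−2,−N])}, and for ξ ≠ 0 and ξ₁ ∈ K_{N,ξ} set φ(ξ,ξ₁) = (|ξ|^p − |ξ₁|^p − |ξ−ξ₁|^p) + i(−ξ³ + ξ₁³ + (ξ−ξ₁)³) ∈ ℂ, which is nonzero there. Then there exist c > 0 and N₀ ≥ 1 (depending on p, t, γ) such that for every N ≥ N₀ and every ξ with γ/2 ≤ |ξ| ≤ γ: | ∫_{K_{N,ξ}} (e^{t·φ(ξ,ξ₁)} − 1)/φ(ξ,ξ₁) dξ₁ | ≥ c · N^p / (N^{2p} + γ² N⁴). -/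
open MeasureTheory Real

/-- The resonance set `K_{N,ξ}` from the ill-posedness argument. -/
def resonanceSet (N ξ : ℝ) : Set ℝ :=
  {ξ₁ : ℝ | (ξ₁ ∈ Set.Icc (-N - 2) (-N) ∧ ξ - ξ₁ ∈ Set.Icc N (N + 2)) ∨
            (ξ₁ ∈ Set.Icc N (N + 2) ∧ ξ - ξ₁ ∈ Set.Icc (-N - 2) (-N))}

/-- The phase function `φ(ξ, ξ₁)` from the ill-posedness argument. -/
noncomputable def phase (p ξ ξ₁ : ℝ) : ℂ :=
  ((|ξ| ^ p - |ξ₁| ^ p - |ξ - ξ₁| ^ p : ℝ) : ℂ) +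
    Complex.I * ((-ξ ^ 3 + ξ₁ ^ 3 + (ξ - ξ₁) ^ 3 : ℝ) : ℂ)


lemma resonance_bounds {N ξ x : ℝ} (hN : 1 ≤ N) (hx : x ∈ resonanceSet N ξ) :
    N ≤ |x| ∧ |x| ≤ N + 2 ∧ N ≤ |ξ - x| ∧ |ξ - x| ≤ N + 2 := by
  rcases hx with ⟨⟨h1, h2⟩, h3, h4⟩ | ⟨⟨h1, h2⟩, h3, h4⟩
  · rw [abs_of_nonpos (by linarith : x ≤ 0), abs_of_nonneg (by linarith : 0 ≤ ξ - x)]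
    refine ⟨?_, ?_, ?_, ?_⟩ <;> linarith
  · rw [abs_of_nonneg (by linarith : 0 ≤ x), abs_of_nonpos (by linarith : ξ - x ≤ 0)]
    refine ⟨?_, ?_, ?_, ?_⟩ <;> linarith

lemma phase_re (p ξ x : ℝ) : (phase p ξ x).re = |ξ| ^ p - |x| ^ p - |ξ - x| ^ p := by
  simp only [phase, Complex.add_re, Complex.ofReal_re, Complex.mul_re, Complex.I_re,
    Complex.I_im, Complex.ofReal_im]
  ring

lemma phase_im (p ξ x : ℝ) : (phase p ξ x).im = -3 * ξ * x * (ξ - x) := by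
  simp only [phase, Complex.add_im, Complex.ofReal_re, Complex.mul_im, Complex.I_re,
    Complex.I_im, Complex.ofReal_im]
  ring

lemma quot_re (t : ℝ) (z : ℂ) : ((Complex.exp (t * z) - 1) / z).re =
    ((-z.re) * (1 - Real.exp (t * z.re) * Real.cos (t * z.im))
      + Real.exp (t * z.re) * Real.sin (t * z.im) * z.im) / (z.re ^ 2 + z.im ^ 2) := by
  rw [Complex.div_re]
  simp only [Complex.sub_re, Complex.sub_im, Complex.exp_re, Complex.exp_im, Complex.one_re,
    Complex.one_im, Complex.re_ofReal_mul, Complex.im_ofReal_mul, Complex.normSq_apply]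
  rw [← add_div]
  congr 1 <;> ring

lemma phase_re_le {p γ N ξ x : ℝ} (hp : 0 < p) (hγ : γ ≤ 1 / 2) (hN : 1 ≤ N)
    (hξ : |ξ| ≤ γ) (hx : x ∈ resonanceSet N ξ) :
    (phase p ξ x).re ≤ -N ^ p ∧ -(2 * 3 ^ p * N ^ p) ≤ (phase p ξ x).re := by
  obtain ⟨h1, h2, h3, h4⟩ := resonance_bounds hN hx
  rw [phase_re]
  have hN0 : 0 ≤ N := by linarith
  have e1 : |ξ| ^ p ≤ N ^ p := Real.rpow_le_rpow (abs_nonneg _) (by linarith) hp.le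
  have e0 : 0 ≤ |ξ| ^ p := Real.rpow_nonneg (abs_nonneg _) _
  have e2 : N ^ p ≤ |x| ^ p := Real.rpow_le_rpow hN0 h1 hp.le
  have e3 : N ^ p ≤ |ξ - x| ^ p := Real.rpow_le_rpow hN0 h3 hp.le
  have e4 : |x| ^ p ≤ (3 * N) ^ p := Real.rpow_le_rpow (abs_nonneg _) (by linarith) hp.le
  have e5 : |ξ - x| ^ p ≤ (3 * N) ^ p := Real.rpow_le_rpow (abs_nonneg _) (by linarith) hp.le
  rw [Real.mul_rpow (by norm_num) hN0] at e4 e5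
  constructor <;> linarith

lemma pointwise {p t γ N ξ x : ℝ} (hp : 0 < p) (ht : 0 < t) (hγ0 : 0 < γ) (hγ : γ ≤ 1 / 2)
    (hN : 1 ≤ N) (hE : N ^ 2 * Real.exp (-t * N ^ p) ≤ 1 / 108)
    (hξ : |ξ| ≤ γ) (hx : x ∈ resonanceSet N ξ) :
    (1 / (4 * (4 * (3 ^ p) ^ 2 + 729))) * N ^ p / (N ^ (2 * p) + γ ^ 2 * N ^ 4) ≤
      ((Complex.exp (t * phase p ξ x) - 1) / phase p ξ x).re := by
  obtain ⟨ha1, ha2⟩ := phase_re_le hp hγ hN hξ hx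
  obtain ⟨h1, h2, h3, h4⟩ := resonance_bounds hN hx
  have hb : |(phase p ξ x).im| ≤ 27 * γ * N ^ 2 := by
    rw [phase_im, abs_mul, abs_mul, abs_mul]
    have : |(-3 : ℝ)| = 3 := by norm_num
    rw [this]
    calc 3 * |ξ| * |x| * |ξ - x| ≤ 3 * γ * (3 * N) * (3 * N) := by
          gcongr <;> linarith
      _ = _ := by ring
  rw [quot_re]
  set a := (phase p ξ x).re
  set b := (phase p ξ x).im
  have hM : 1 ≤ N ^ p := Real.one_le_rpow hN hp.le
  have h2p : N ^ (2 * p) = (N ^ p) ^ 2 := by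
    rw [mul_comm, Real.rpow_mul (by linarith)]; norm_cast
  rw [h2p]
  set M := N ^ p
  set q : ℝ := 3 ^ p
  have hq : 0 < q := Real.rpow_pos_of_pos (by norm_num) _
  have hexp : Real.exp (t * a) ≤ Real.exp (-t * M) := by
    apply Real.exp_le_exp.2; nlinarith
  set e := Real.exp (t * a)
  have he0 : 0 < e := Real.exp_pos _
  have hE2 : N ^ 2 * e ≤ 1 / 108 := le_trans (by gcongr) hE
  have hE1 : e ≤ 1 / 108 := le_trans (le_mul_of_one_le_left he0.le (one_le_pow₀ hN)) hE2
  have hc : e * Real.cos (t * b) ≤ 1 / 108 := by nlinarith [Real.cos_le_one (t * b)]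
  have hs : |e * Real.sin (t * b) * b| ≤ 1 / 8 := by
    rw [abs_mul, abs_mul, abs_of_pos he0]
    calc e * |Real.sin (t * b)| * |b| ≤ e * 1 * (27 * γ * N ^ 2) := by
          gcongr; exact Real.abs_sin_le_one _
      _ = 27 * γ * (N ^ 2 * e) := by ring
      _ ≤ 27 * (1 / 2) * (1 / 108) := by gcongr
      _ = 1 / 8 := by norm_num
  have hs' := (abs_le.1 hs).1
  have hnum : M / 4 ≤ (-a) * (1 - e * Real.cos (t * b)) + e * Real.sin (t * b) * b := by
    have : M * (107 / 108) ≤ (-a) * (1 - e * Real.cos (t * b)) := by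
      apply mul_le_mul <;> linarith
    linarith
  have hden : a ^ 2 + b ^ 2 ≤ (4 * q ^ 2 + 729) * (M ^ 2 + γ ^ 2 * N ^ 4) := by
    have i1 : a ^ 2 ≤ (2 * q * M) ^ 2 := by
      apply sq_le_sq'
      · exact ha2
      · have : 0 < q * M := by positivity
        linarith
    have i2 : b ^ 2 ≤ (27 * γ * N ^ 2) ^ 2 := sq_le_sq' (abs_le.1 hb).1 (abs_le.1 hb).2
    have i3 : 0 ≤ q ^ 2 * (γ ^ 2 * N ^ 4) := by positivity
    have i4 : 0 ≤ M ^ 2 := by positivity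
    nlinarith
  have hpos : 0 < a ^ 2 + b ^ 2 := by
    have : 0 < a ^ 2 := by nlinarith
    positivity
  have hD : 0 < M ^ 2 + γ ^ 2 * N ^ 4 := by positivity
  calc (1 / (4 * (4 * q ^ 2 + 729))) * M / (M ^ 2 + γ ^ 2 * N ^ 4)
      = (M / 4) / ((4 * q ^ 2 + 729) * (M ^ 2 + γ ^ 2 * N ^ 4)) := by field_simp
    _ ≤ (M / 4) / (a ^ 2 + b ^ 2) := by gcongr
    _ ≤ _ := by gcongr

lemma resonance_compact (N ξ : ℝ) : IsCompact (resonanceSet N ξ) := by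
  have : resonanceSet N ξ = (Set.Icc (-N - 2) (-N) ∩ (fun x => ξ - x) ⁻¹' Set.Icc N (N + 2)) ∪
      (Set.Icc N (N + 2) ∩ (fun x => ξ - x) ⁻¹' Set.Icc (-N - 2) (-N)) := rfl
  rw [this]
  have hc : Continuous (fun x : ℝ => ξ - x) := by fun_prop
  exact (isCompact_Icc.inter_right (isClosed_Icc.preimage hc)).union
    (isCompact_Icc.inter_right (isClosed_Icc.preimage hc))

lemma resonance_volume {N ξ : ℝ} (hξ : |ξ| ≤ 1 / 2) :
    1 ≤ volume.real (resonanceSet N ξ) := by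
  obtain ⟨h1, h2⟩ := abs_le.1 hξ
  have hsub : Set.Icc (N + 1 / 2) (N + 3 / 2) ⊆ resonanceSet N ξ := by
    rintro x ⟨h3, h4⟩
    right
    refine ⟨⟨?_, ?_⟩, ?_, ?_⟩ <;> linarith
  have := measureReal_mono hsub (h₂ := (resonance_compact N ξ).measure_lt_top.ne) (μ := volume)
  rw [Real.volume_real_Icc_of_le (by linarith)] at this
  linarith

lemma eventually_small (p t : ℝ) (hp : 0 < p) (ht : 0 < t) :
    ∃ N₀ : ℝ, 1 ≤ N₀ ∧ ∀ N : ℝ, N₀ ≤ N → N ^ 2 * Real.exp (-t * N ^ p) ≤ 1 / 108 := by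
  have h := (tendsto_rpow_mul_exp_neg_mul_atTop_nhds_zero (2 / p) t ht).comp
    (tendsto_rpow_atTop hp)
  have h' := h.eventually_le_const (show (0 : ℝ) < 1 / 108 by norm_num)
  obtain ⟨A, hA⟩ := Filter.eventually_atTop.1 h'
  refine ⟨max A 1, le_max_right _ _, fun N hN => ?_⟩
  have h1 := hA N (le_trans (le_max_left _ _) hN)
  have hN1 : 1 ≤ N := le_trans (le_max_right _ _) hN
  simp only [Function.comp] at h1
  rw [← Real.rpow_mul (by linarith), mul_div_cancel₀ _ hp.ne'] at h1
  exact_mod_cast h1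

theorem stmt_12 (p t γ : ℝ) (hp : 0 < p) (ht : 0 < t)
    (hγ0 : 0 < γ) (hγ : γ ≤ 1 / 2) :
    ∃ c : ℝ, 0 < c ∧ ∃ N₀ : ℝ, 1 ≤ N₀ ∧
      ∀ N : ℝ, N₀ ≤ N → ∀ ξ : ℝ, γ / 2 ≤ |ξ| → |ξ| ≤ γ →
        c * N ^ p / (N ^ (2 * p) + γ ^ 2 * N ^ 4) ≤
          ‖∫ ξ₁ in resonanceSet N ξ,
              (Complex.exp (t * phase p ξ ξ₁) - 1) / phase p ξ ξ₁‖ := by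
  obtain ⟨N₀, hN₀, hE⟩ := eventually_small p t hp ht
  have hq : (0 : ℝ) < 3 ^ p := Real.rpow_pos_of_pos (by norm_num) _
  refine ⟨1 / (4 * (4 * (3 ^ p) ^ 2 + 729)), by positivity, N₀, hN₀, ?_⟩
  intro N hN ξ _ hξ
  have hN1 : 1 ≤ N := hN₀.trans hN
  have hcpt := resonance_compact N ξ
  have hcont : Continuous (phase p ξ) := by
    unfold phase
    have c1 : Continuous fun x : ℝ => |x| ^ p :=
      continuous_abs.rpow_const (fun _ => Or.inr hp.le)
    have c2 : Continuous fun x : ℝ => |ξ - x| ^ p :=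
      (continuous_abs.comp (continuous_const.sub continuous_id)).rpow_const
        (fun _ => Or.inr hp.le)
    fun_prop
  have hint : IntegrableOn (fun x => (Complex.exp (t * phase p ξ x) - 1) / phase p ξ x)
      (resonanceSet N ξ) := by
    apply ContinuousOn.integrableOn_compact hcpt
    apply ContinuousOn.div (by fun_prop) hcont.continuousOn
    intro x hx h0
    have h1 := (phase_re_le hp hγ hN1 hξ hx).1
    have h2 : 0 < N ^ p := Real.rpow_pos_of_pos (by linarith) _
    rw [h0, Complex.zero_re] at h1
    linarith
  refine le_trans ?_ (Complex.re_le_norm _)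
  have hre := integral_re hint
  simp only [RCLike.re_to_complex] at hre
  rw [← hre]
  set m := 1 / (4 * (4 * ((3 : ℝ) ^ p) ^ 2 + 729)) * N ^ p / (N ^ (2 * p) + γ ^ 2 * N ^ 4) with hm
  have hm0 : 0 ≤ m := by
    have : 0 < N := by linarith
    positivity
  calc m ≤ m * volume.real (resonanceSet N ξ) :=
        le_mul_of_one_le_right hm0 (resonance_volume (hξ.trans hγ))
    _ ≤ _ := setIntegral_ge_of_const_le_real hcpt.measurableSet hcpt.measure_lt_top.ne
        (fun x hx => pointwise hp ht hγ0 hγ hN1 (hE N hN) hξ hx) hint.re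
end

section
/- Let η : ℝ → ℂ be a smooth (C^∞) function with support contained in [−2, 2], and let φ : ℝ → ℝ be a smooth (C^∞) function with 0 ≤ φ ≤ 1 and support contained in {τ : 1/2 ≤ |τ| ≤ 2}. Then there exists a constant C > 0 (depending only on η and φ) such that for every a ≥ 0: Σ_{j ∈ ℤ} (1 + 2^j + a)^{1/2} · ‖g_j^a‖_{L²(ℝ)} ≤ C, where g_j^a(t) = ∫_ℝ e^{2πitτ} φ(2^{−j} τ) ( ∫_ℝ e^{−2πisτ} e^{−a|s|} η(s) ds ) dτ. -/
open MeasureTheory Real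
open scoped FourierTransform

lemma aux_ibp1 (f : ℝ → ℂ) (hf : ContDiff ℝ 1 f) (h3 : f 3 = 0) (c : ℂ) :
    c * ∫ s in (0:ℝ)..3, Complex.exp (-(c * s)) * f s
      = f 0 + ∫ s in (0:ℝ)..3, Complex.exp (-(c * s)) * deriv f s := by
  have hd : ∀ s : ℝ, HasDerivAt (fun s : ℝ => Complex.exp (-(c * s)) * f s)
      (Complex.exp (-(c * s)) * deriv f s - c * (Complex.exp (-(c * s)) * f s)) s := by
    intro s
    have h1 : HasDerivAt f (deriv f s) s :=
      (hf.differentiable one_ne_zero s).hasDerivAt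
    have h2 : HasDerivAt (fun s : ℝ => -(c * (s:ℂ))) (-(c * 1)) s :=
      ((Complex.ofRealCLM.hasDerivAt (x := s)).const_mul c).neg
    exact (h2.cexp.mul h1).congr_deriv (by ring)
  have hc : Continuous f := hf.continuous
  have hc' : Continuous (deriv f) := hf.continuous_deriv le_rfl
  have i1 : IntervalIntegrable (fun s : ℝ => Complex.exp (-(c * s)) * deriv f s) volume 0 3 :=
    Continuous.intervalIntegrable (by fun_prop) _ _
  have i2 : IntervalIntegrable (fun s : ℝ => c * (Complex.exp (-(c * s)) * f s)) volume 0 3 :=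
    Continuous.intervalIntegrable (by fun_prop) _ _
  have := intervalIntegral.integral_eq_sub_of_hasDerivAt (a := 0) (b := 3)
    (fun s _ => hd s) (i1.sub i2)
  rw [intervalIntegral.integral_sub i1 i2, intervalIntegral.integral_const_mul] at this
  simp [h3] at this
  linear_combination -this

lemma aux_ibp2 (f : ℝ → ℂ) (hf : ContDiff ℝ 2 f) (h3 : f 3 = 0) (h3' : deriv f 3 = 0) (c : ℂ) :
    c ^ 2 * ∫ s in (0:ℝ)..3, Complex.exp (-(c * s)) * f s
      = c * f 0 + deriv f 0 + ∫ s in (0:ℝ)..3, Complex.exp (-(c * s)) * deriv (deriv f) s := by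
  have h1 := aux_ibp1 f (hf.of_le (by norm_num)) h3 c
  have h2 := aux_ibp1 (deriv f) (hf.deriv' ) h3' c
  linear_combination c * h1 + h2

lemma aux_int_bound (f : ℝ → ℂ) (M : ℝ) (hM : ∀ s, ‖f s‖ ≤ M) (c : ℂ) (hc : 0 ≤ c.re) :
    ‖∫ s in (0:ℝ)..3, Complex.exp (-(c * s)) * f s‖ ≤ 3 * M := by
  have := intervalIntegral.norm_integral_le_of_norm_le_const (a := 0) (b := 3) (C := M)
    (f := fun s : ℝ => Complex.exp (-(c * s)) * f s) ?_
  · simpa [mul_comm] using this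
  · intro s hs
    rw [Set.uIoc_of_le (by norm_num)] at hs
    rw [norm_mul, Complex.norm_exp]
    have : rexp (-(c * s)).re ≤ 1 := by
      rw [Real.exp_le_one_iff]
      simp
      exact mul_nonneg hc hs.1.le
    calc _ ≤ 1 * ‖f s‖ := by gcongr
      _ ≤ M := by simpa using hM s

lemma aux_plancherel (h : ℝ → ℂ) (hs : ContDiff ℝ (⊤ : ℕ∞) h) (hc : HasCompactSupport h) :
    ∫ t : ℝ, ‖∫ τ : ℝ, Complex.exp (2 * π * t * τ * Complex.I) * h τ‖ ^ 2 = ∫ τ, ‖h τ‖ ^ 2 := by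
  have := SchwartzMap.integral_norm_sq_fourier (𝓕⁻ (hc.toSchwartzMap hs))
  rw [FourierTransform.fourier_fourierInv_eq] at this
  rw [show (∫ τ, ‖h τ‖ ^ 2) = ∫ τ, ‖(hc.toSchwartzMap hs) τ‖ ^ 2 from rfl, this]
  congr 1 with t
  rw [SchwartzMap.fourierInv_coe, Real.fourierInv_eq']
  congr 3 with τ
  rw [smul_eq_mul]
  congr 2
  simp
  ring

/-- the Fourier transform -/
lemma aux_split (η : ℝ → ℂ) (hη : Continuous η)
    (hηsupp : Function.support η ⊆ Set.Icc (-2) 2) (a τ : ℝ) :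
    ∫ s : ℝ, Complex.exp (-(2 * π * s * τ) * Complex.I) *
                  ((Real.exp (-(a * |s|)) : ℂ) * η s)
    = (∫ s in (0:ℝ)..3, Complex.exp (-((a + 2 * π * τ * Complex.I) * s)) * η s)
     + ∫ s in (0:ℝ)..3, Complex.exp (-((a - 2 * π * τ * Complex.I) * s)) * η (-s) := by
  have hsub : Function.support (fun s : ℝ => Complex.exp (-(2 * π * s * τ) * Complex.I) *
                  ((Real.exp (-(a * |s|)) : ℂ) * η s)) ⊆ Set.Ioc (-3) 3 := by
    intro s hs
    have : s ∈ Function.support η := by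
      intro h; apply hs; simp [h]
    have := hηsupp this
    exact ⟨by linarith [this.1], by linarith [this.2]⟩
  rw [← intervalIntegral.integral_eq_integral_of_support_subset hsub]
  have hcont : Continuous (fun s : ℝ => Complex.exp (-(2 * π * s * τ) * Complex.I) *
                  ((Real.exp (-(a * |s|)) : ℂ) * η s)) := by fun_prop
  rw [← intervalIntegral.integral_add_adjacent_intervals (b := 0)
    (hcont.intervalIntegrable _ _) (hcont.intervalIntegrable _ _), add_comm]
  congr 1
  · apply intervalIntegral.integral_congr
    intro s hs
    rw [Set.uIcc_of_le (by norm_num)] at hs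
    simp only
    rw [abs_of_nonneg hs.1, Complex.ofReal_exp, ← mul_assoc, ← Complex.exp_add]
    congr 2
    push_cast; ring
  · have := intervalIntegral.integral_comp_neg (a := 0) (b := 3) (fun s : ℝ => Complex.exp (-(2 * π * s * τ) * Complex.I) *
                  ((Real.exp (-(a * |s|)) : ℂ) * η s))
    rw [neg_zero] at this
    rw [← this]
    apply intervalIntegral.integral_congr
    intro s hs
    rw [Set.uIcc_of_le (by norm_num)] at hs
    simp only
    rw [abs_neg, abs_of_nonneg hs.1, Complex.ofReal_exp, ← mul_assoc, ← Complex.exp_add]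
    congr 2
    push_cast; ring

lemma aux_smooth (η : ℝ → ℂ) (hη : Continuous η)
    (hηsupp : Function.support η ⊆ Set.Icc (-2) 2) (a : ℝ) :
    ContDiff ℝ (⊤ : ℕ∞) (fun τ : ℝ => ∫ s : ℝ, Complex.exp (-(2 * π * s * τ) * Complex.I) *
                  ((Real.exp (-(a * |s|)) : ℂ) * η s)) := by
  have hcs : HasCompactSupport η :=
    HasCompactSupport.of_support_subset_isCompact isCompact_Icc hηsupp
  have := Real.contDiff_fourier (f := fun s : ℝ => ((Real.exp (-(a * |s|)) : ℂ) * η s)) (N := ⊤) ?_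
  · refine (congrArg (ContDiff ℝ _) (funext fun τ => ?_)).mpr this
    rw [Real.fourier_eq']
    congr 1 with s
    rw [smul_eq_mul]
    congr 2
    simp
    ring
  · intro n _
    apply Continuous.integrable_of_hasCompactSupport
    · fun_prop
    · exact (hcs.mul_left (f := fun s : ℝ => (Real.exp (-(a * |s|)) : ℂ))).norm.mul_left

lemma aux_C (f : ℝ → ℂ) (hf : ContDiff ℝ (⊤ : ℕ∞) f)
    (hsupp : Function.support f ⊆ Set.Icc (-2) 2) :
    ∃ B : ℝ, 0 ≤ B ∧ ∀ c : ℂ, 0 ≤ c.re →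
      ‖c ^ 2 * (∫ s in (0:ℝ)..3, Complex.exp (-(c * s)) * f s) - c * f 0‖ ≤ B := by
  have hcs : HasCompactSupport f :=
    HasCompactSupport.of_support_subset_isCompact isCompact_Icc hsupp
  have hf2 : ContDiff ℝ 2 f := contDiff_infty.1 hf 2
  have hc2 : Continuous (deriv (deriv f)) := by
    have h1 : ContDiff ℝ 1 (deriv f) := hf2.deriv'
    exact h1.continuous_deriv le_rfl
  obtain ⟨M, hM⟩ := hcs.deriv.deriv.exists_bound_of_continuous hc2
  have hts : tsupport f ⊆ Set.Icc (-2) 2 := closure_minimal hsupp isClosed_Icc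
  have h3 : f 3 = 0 := by
    by_contra h
    have := (hsupp h).2
    norm_num at this
  have h3' : deriv f 3 = 0 := by
    by_contra h
    have := (hts (support_deriv_subset h)).2
    norm_num at this
  have hM0 : 0 ≤ M := (norm_nonneg _).trans (hM 0)
  refine ⟨‖deriv f 0‖ + 3 * M, by positivity, fun c hc => ?_⟩
  rw [aux_ibp2 f hf2 h3 h3']
  calc _ = ‖deriv f 0 + ∫ s in (0:ℝ)..3, Complex.exp (-(c * s)) * deriv (deriv f) s‖ := by
        congr 1; ring
    _ ≤ _ := (norm_add_le _ _).trans (by gcongr; exact aux_int_bound _ M hM c hc)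

lemma aux_F (η : ℝ → ℂ) (hη : ContDiff ℝ (⊤ : ℕ∞) η)
    (hηsupp : Function.support η ⊆ Set.Icc (-2) 2) :
    ∃ K : ℝ, 0 < K ∧ ∀ a τ : ℝ, 0 ≤ a →
      ‖∫ s : ℝ, Complex.exp (-(2 * π * s * τ) * Complex.I) *
                  ((Real.exp (-(a * |s|)) : ℂ) * η s)‖ * (1 + a) ≤ K ∧
      ‖∫ s : ℝ, Complex.exp (-(2 * π * s * τ) * Complex.I) *
                  ((Real.exp (-(a * |s|)) : ℂ) * η s)‖ * τ ^ 2 ≤ K * (1 + a) := by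
  obtain ⟨B1, hB1, h1⟩ := aux_C η hη hηsupp
  obtain ⟨B2, hB2, h2⟩ := aux_C (fun s => η (-s)) (hη.comp contDiff_neg) (by
    intro s hs
    have := hηsupp (show -s ∈ Function.support η from hs)
    exact ⟨by linarith [this.2], by linarith [this.1]⟩)
  have hcs : HasCompactSupport η :=
    HasCompactSupport.of_support_subset_isCompact isCompact_Icc hηsupp
  obtain ⟨M, hM⟩ := hcs.exists_bound_of_continuous hη.continuous
  have hM0 : 0 ≤ M := (norm_nonneg _).trans (hM 0)
  set L := 2 * ‖η 0‖ + B1 + B2 with hL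
  have hL0 : 0 ≤ L := by positivity
  refine ⟨4 * L + 12 * M + 1, by positivity, fun a τ ha => ?_⟩
  rw [aux_split η hη.continuous hηsupp]
  set c : ℂ := a + 2 * π * τ * Complex.I with hc
  set d : ℂ := a - 2 * π * τ * Complex.I with hd
  have hcre : c.re = a := by simp [hc]
  have hdre : d.re = a := by simp [hd]
  set G1 := ∫ s in (0:ℝ)..3, Complex.exp (-(c * s)) * η s with hG1
  set G2 := ∫ s in (0:ℝ)..3, Complex.exp (-(d * s)) * η (-s) with hG2
  have e1 : ‖G1‖ ≤ 3 * M := aux_int_bound _ M hM c (by rw [hcre]; exact ha)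
  have e2 : ‖G2‖ ≤ 3 * M := aux_int_bound _ M (fun s => hM _) d (by rw [hdre]; exact ha)
  have e3 := h1 c (by rw [hcre]; exact ha)
  have e4 := h2 d (by rw [hdre]; exact ha)
  simp only [neg_zero] at e4
  rw [← hG1] at e3
  rw [← hG2] at e4
  set R1 := c ^ 2 * G1 - c * η 0 with hR1
  set R2 := d ^ 2 * G2 - d * η 0 with hR2
  have hcd : d = (starRingEnd ℂ) c := by
    simp only [hc, hd, map_add, map_mul, Complex.conj_ofReal, Complex.conj_I, map_ofNat]; ring
  have hnd : ‖d‖ = ‖c‖ := by rw [hcd, Complex.norm_conj]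
  have hn : ‖c‖ ^ 2 = a ^ 2 + (2 * π * τ) ^ 2 := by
    rw [← Complex.normSq_eq_norm_sq, Complex.normSq_apply]
    simp [hc]; ring
  have hsum : c + d = ((2 * a : ℝ) : ℂ) := by simp [hc, hd]; ring
  have key : c ^ 2 * d ^ 2 * (G1 + G2) = c * d * ((2 * a : ℝ) : ℂ) * η 0 + d ^ 2 * R1 + c ^ 2 * R2 := by
    rw [← hsum]; ring
  have key2 : ‖c‖ ^ 2 * (‖c‖ ^ 2 * ‖G1 + G2‖) ≤ ‖c‖ ^ 2 * (L * (1 + a)) := by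
    have : ‖c‖ ^ 2 * (‖c‖ ^ 2 * ‖G1 + G2‖) = ‖c ^ 2 * d ^ 2 * (G1 + G2)‖ := by
      simp only [norm_mul, norm_pow, hnd]; ring
    rw [this, key]
    refine (norm_add₃_le).trans ?_
    simp only [norm_mul, norm_pow, hnd, Complex.norm_real, Real.norm_eq_abs, abs_of_nonneg ha, abs_two]
    have : ‖c‖ ^ 2 * (L * (1 + a)) - ‖c‖ ^ 2 * (2 * a * ‖η 0‖ + B1 + B2)
       = ‖c‖ ^ 2 * (2 * ‖η 0‖ + a * (B1 + B2)) := by rw [hL]; ring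
    have h' : 0 ≤ ‖c‖ ^ 2 * (2 * ‖η 0‖ + a * (B1 + B2)) := by positivity
    have h3 : ‖c‖ ^ 2 * ‖R1‖ ≤ ‖c‖ ^ 2 * B1 := by gcongr
    have h4 : ‖c‖ ^ 2 * ‖R2‖ ≤ ‖c‖ ^ 2 * B2 := by gcongr
    linarith
  have key3 : ‖c‖ ^ 2 * ‖G1 + G2‖ ≤ L * (1 + a) := by
    rcases (sq_nonneg ‖c‖).eq_or_lt with h | h
    · rw [← h]; simp; positivity
    · exact le_of_mul_le_mul_left key2 h
  rw [hn] at key3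
  have hN : ‖G1 + G2‖ ≤ 6 * M := (norm_add_le _ _).trans (by linarith)
  set N := ‖G1 + G2‖
  have hN0 : 0 ≤ N := norm_nonneg _
  constructor
  · rcases le_total a 1 with h | h
    · nlinarith
    · have h5 : a ^ 2 * N ≤ L * (1 + a) := by nlinarith [mul_nonneg (sq_nonneg (2 * π * τ)) hN0]
      have h6 : (1 + a) ^ 2 ≤ 4 * a ^ 2 := by nlinarith
      have h7 : (1 + a) * (N * (1 + a)) ≤ (1 + a) * (4 * L) := by nlinarith
      have := le_of_mul_le_mul_left h7 (by linarith)
      linarith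
  · have h8 : τ ^ 2 ≤ (2 * π * τ) ^ 2 := by
      have : 1 ≤ (2 * π) ^ 2 := by nlinarith [Real.pi_gt_three]
      rw [mul_pow]
      nlinarith [sq_nonneg τ]
    have h9 : N * τ ^ 2 ≤ L * (1 + a) := by
      nlinarith [mul_nonneg (sq_nonneg a) hN0]
    nlinarith [mul_nonneg hL0 ha, mul_nonneg hM0 ha]

lemma aux_term (F : ℝ → ℂ) (hF : ContDiff ℝ (⊤ : ℕ∞) F)
    (φ : ℝ → ℝ) (hφ : ContDiff ℝ (⊤ : ℕ∞) φ)
    (hφ0 : ∀ τ, 0 ≤ φ τ) (hφ1 : ∀ τ, φ τ ≤ 1)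
    (hφsupp : Function.support φ ⊆ {τ : ℝ | 1 / 2 ≤ |τ| ∧ |τ| ≤ 2}) (j : ℤ)
    (D : ℝ) (hD0 : 0 ≤ D) (hD : ∀ τ : ℝ, (2:ℝ) ^ j / 2 ≤ |τ| → ‖F τ‖ ≤ D) :
    ∫ t : ℝ, ‖∫ τ : ℝ, Complex.exp (2 * π * t * τ * Complex.I) *
              ((φ ((2 : ℝ) ^ (-j) * τ) : ℂ) * F τ)‖ ^ 2 ≤ 4 * (2:ℝ) ^ j * D ^ 2 := by
  have hx : (0:ℝ) < 2 ^ j := by positivity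
  set x : ℝ := 2 ^ j with hxd
  have hsup : ∀ τ : ℝ, φ ((2 : ℝ) ^ (-j) * τ) ≠ 0 → x / 2 ≤ |τ| ∧ |τ| ≤ 2 * x := by
    intro τ h
    have := hφsupp h
    simp only [Set.mem_ofPred_eq, zpow_neg, abs_mul, abs_inv, ← hxd, abs_of_pos hx] at this
    rw [inv_mul_eq_div, le_div_iff₀ hx, div_le_iff₀ hx] at this
    exact ⟨by linarith [this.1], this.2⟩
  have hcs : HasCompactSupport (fun τ : ℝ => ((φ ((2 : ℝ) ^ (-j) * τ) : ℂ) * F τ)) := by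
    refine HasCompactSupport.of_support_subset_isCompact (isCompact_Icc (a := -(2*x)) (b := 2 * x)) ?_
    intro τ h
    have : φ ((2 : ℝ) ^ (-j) * τ) ≠ 0 := by
      intro h'; apply h; simp only [h']; simp
    exact abs_le.1 (hsup τ this).2
  have hsm : ContDiff ℝ (⊤ : ℕ∞) (fun τ : ℝ => ((φ ((2 : ℝ) ^ (-j) * τ) : ℂ) * F τ)) := by
    refine ContDiff.mul ?_ hF
    exact Complex.ofRealCLM.contDiff.comp (hφ.comp (contDiff_const.mul contDiff_id))
  rw [aux_plancherel _ hsm hcs]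
  have hle : ∀ τ : ℝ, ‖((φ ((2 : ℝ) ^ (-j) * τ) : ℂ) * F τ)‖ ^ 2
      ≤ (Set.Icc (-(2*x)) (2*x)).indicator (fun _ => D ^ 2) τ := by
    intro τ
    by_cases h : φ ((2 : ℝ) ^ (-j) * τ) = 0
    · rw [h]; simp
      exact Set.indicator_nonneg (fun _ _ => by positivity) _
    · have h2 := hsup τ h
      rw [Set.indicator_of_mem (show τ ∈ Set.Icc (-(2*x)) (2*x) from abs_le.1 h2.2)]
      rw [norm_mul, Complex.norm_real, Real.norm_eq_abs, abs_of_nonneg (hφ0 _)]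
      have : φ ((2 : ℝ) ^ (-j) * τ) * ‖F τ‖ ≤ 1 * D :=
        mul_le_mul (hφ1 _) (hD τ h2.1) (norm_nonneg _) zero_le_one
      rw [one_mul] at this
      have h0 := hφ0 ((2 : ℝ) ^ (-j) * τ)
      gcongr
  calc _ ≤ ∫ τ : ℝ, (Set.Icc (-(2*x)) (2*x)).indicator (fun _ => D ^ 2) τ := by
        apply integral_mono_of_nonneg
        · exact Filter.Eventually.of_forall (fun τ => by positivity)
        · rw [integrable_indicator_iff measurableSet_Icc]
          exact integrableOn_const (by simp)
        · exact Filter.Eventually.of_forall hle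
    _ = _ := by
        rw [integral_indicator measurableSet_Icc, setIntegral_const]
        rw [Real.volume_real_Icc_of_le (by linarith)]
        rw [smul_eq_mul]; ring

lemma aux_sum : Summable (fun k : ℤ => (√(1/2)) ^ k.natAbs) := by
  have h : Summable (fun n : ℕ => (√(1/2)) ^ n) := by
    apply summable_geometric_of_lt_one (by positivity)
    rw [Real.sqrt_lt' one_pos]; norm_num
  apply Summable.of_nat_of_neg
  · simpa using h
  · simpa using h

lemma aux_num (K A x I D : ℝ) (hK : 0 < K) (n : ℕ) (hI0 : 0 ≤ A + x)
    (hI : I ≤ 4 * x * D ^ 2) (h : 4 * x * (A + x) * D ^ 2 ≤ 784 * K ^ 2 * (1/2) ^ n) :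
    (A + x) ^ ((1:ℝ)/2) * I ^ ((1:ℝ)/2) ≤ 28 * K * (√(1/2)) ^ n := by
  rw [← Real.sqrt_eq_rpow, ← Real.sqrt_eq_rpow, ← Real.sqrt_mul hI0]
  apply Real.sqrt_le_iff.2 ⟨by positivity, ?_⟩
  rw [mul_pow, ← pow_mul, mul_comm n 2, pow_mul, Real.sq_sqrt (by norm_num)]
  nlinarith

theorem stmt_14 (η : ℝ → ℂ) (hη : ContDiff ℝ (⊤ : ℕ∞) η)
    (hηsupp : Function.support η ⊆ Set.Icc (-2) 2)
    (φ : ℝ → ℝ) (hφ : ContDiff ℝ (⊤ : ℕ∞) φ)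
    (hφ0 : ∀ τ, 0 ≤ φ τ) (hφ1 : ∀ τ, φ τ ≤ 1)
    (hφsupp : Function.support φ ⊆ {τ : ℝ | 1 / 2 ≤ |τ| ∧ |τ| ≤ 2}) :
    ∃ C : ℝ, 0 < C ∧ ∀ a : ℝ, 0 ≤ a →
      Summable (fun j : ℤ =>
        (1 + (2 : ℝ) ^ j + a) ^ ((1 : ℝ) / 2) *
          (∫ t : ℝ, ‖∫ τ : ℝ, Complex.exp (2 * π * t * τ * Complex.I) *
              ((φ ((2 : ℝ) ^ (-j) * τ) : ℂ) *
                ∫ s : ℝ, Complex.exp (-(2 * π * s * τ) * Complex.I) *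
                  ((Real.exp (-(a * |s|)) : ℂ) * η s))‖ ^ 2) ^ ((1 : ℝ) / 2)) ∧
      (∑' j : ℤ,
        (1 + (2 : ℝ) ^ j + a) ^ ((1 : ℝ) / 2) *
          (∫ t : ℝ, ‖∫ τ : ℝ, Complex.exp (2 * π * t * τ * Complex.I) *
              ((φ ((2 : ℝ) ^ (-j) * τ) : ℂ) *
                ∫ s : ℝ, Complex.exp (-(2 * π * s * τ) * Complex.I) *
                  ((Real.exp (-(a * |s|)) : ℂ) * η s))‖ ^ 2) ^ ((1 : ℝ) / 2)) ≤ C := by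
  obtain ⟨K, hK, hF⟩ := aux_F η hη hηsupp
  have hS0 : 0 ≤ ∑' k : ℤ, (√(1/2)) ^ k.natAbs := tsum_nonneg (fun k => by positivity)
  refine ⟨28 * K * (∑' k : ℤ, (√(1/2)) ^ k.natAbs) + 1, by positivity, fun a ha => ?_⟩
  obtain ⟨m, hm1, hm2⟩ := exists_mem_Ico_zpow (show (0:ℝ) < 1 + a by linarith) one_lt_two
  have hterm : ∀ j : ℤ, (1 + (2 : ℝ) ^ j + a) ^ ((1 : ℝ) / 2) *
          (∫ t : ℝ, ‖∫ τ : ℝ, Complex.exp (2 * π * t * τ * Complex.I) *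
              ((φ ((2 : ℝ) ^ (-j) * τ) : ℂ) *
                ∫ s : ℝ, Complex.exp (-(2 * π * s * τ) * Complex.I) *
                  ((Real.exp (-(a * |s|)) : ℂ) * η s))‖ ^ 2) ^ ((1 : ℝ) / 2)
          ≤ 28 * K * (√(1/2)) ^ (j - m).natAbs := by
    intro j
    have hx : (0:ℝ) < 2 ^ j := by positivity
    have hp : (0:ℝ) < 2 ^ m := by positivity
    have hA : 0 < 1 + a := by linarith
    have hT := aux_term (fun τ : ℝ => ∫ s : ℝ, Complex.exp (-(2 * π * s * τ) * Complex.I) *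
                  ((Real.exp (-(a * |s|)) : ℂ) * η s)) (aux_smooth η hη.continuous hηsupp a)
                  φ hφ hφ0 hφ1 hφsupp j
    rw [show 1 + (2:ℝ) ^ j + a = (1 + a) + 2 ^ j by ring]
    rw [zpow_add_one₀ two_ne_zero] at hm2
    set A := 1 + a with hAd
    rcases le_total j m with hjm | hjm
    · obtain ⟨n, hn⟩ := Int.eq_ofNat_of_zero_le (sub_nonneg.2 hjm)
      have hab : (j - m).natAbs = n := by omega
      have hj : (2:ℝ) ^ j = 2 ^ m * (1/2) ^ n := by
        rw [show j = m - n by omega, zpow_sub₀ two_ne_zero]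
        simp [div_eq_mul_inv]
      have hq1 : ((1:ℝ)/2) ^ n ≤ 1 := pow_le_one₀ (by norm_num) (by norm_num)
      have hq0 : 0 < ((1:ℝ)/2) ^ n := by positivity
      rw [hab]
      refine aux_num K A _ _ (K / A) hK n (by positivity)
        (hT (K / A) (by positivity) fun τ _ => ?_) ?_
      · rw [le_div_iff₀ hA]; exact (hF a τ ha).1
      · rw [hj] at hx ⊢
        generalize ((1:ℝ)/2) ^ n = q at *
        generalize (2:ℝ) ^ m = p at *
        have h1 : p * q ≤ A * q := by gcongr
        have h2 : A * q ≤ A * 1 := by gcongr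
        rw [div_pow, ← mul_div_assoc, div_le_iff₀ (by positivity)]
        have h3 : 4 * (p * q) * (A + p * q) ≤ 4 * (A * q) * (A + A) := by
          gcongr; linarith
        have h4 : 4 * (A * q) * (A + A) * K ^ 2 = 8 * (K ^ 2 * q * A ^ 2) := by ring
        have h5 : 0 ≤ K ^ 2 * q * A ^ 2 := by positivity
        nlinarith [mul_le_mul_of_nonneg_right h3 (sq_nonneg K)]
    · obtain ⟨n, hn⟩ := Int.eq_ofNat_of_zero_le (sub_nonneg.2 hjm)
      have hab : (j - m).natAbs = n := by omega
      have hj : (2:ℝ) ^ j = 2 ^ m * 2 ^ n := by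
        rw [show j = m + n by omega, zpow_add₀ two_ne_zero]
        simp
      have hq1 : 1 ≤ (2:ℝ) ^ n := one_le_pow₀ (by norm_num)
      rw [hab]
      refine aux_num K A _ _ (4 * K * A / (2 ^ j) ^ 2) hK n (by positivity)
        (hT _ (by positivity) fun τ hτ => ?_) ?_
      · rw [le_div_iff₀ (by positivity)]
        have h1 := (hF a τ ha).2
        have h2 : ((2:ℝ) ^ j / 2) ^ 2 ≤ τ ^ 2 := by
          rw [← sq_abs τ]; gcongr
        have h3 : ((2:ℝ) ^ j) ^ 2 ≤ 4 * τ ^ 2 := by nlinarith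
        calc _ ≤ ‖∫ s : ℝ, Complex.exp (-(2 * π * s * τ) * Complex.I) *
                  ((Real.exp (-(a * |s|)) : ℂ) * η s)‖ * (4 * τ ^ 2) := by gcongr
          _ ≤ _ := by linarith
      · rw [one_div, inv_pow]
        rw [hj] at hx ⊢
        generalize (2:ℝ) ^ n = q at *
        generalize (2:ℝ) ^ m = p at *
        have hq0 : 0 < q := by linarith
        have hpq : p ≤ p * q := by nlinarith
        have h1 : 4 * (p * q) * (A + p * q) ≤ 4 * (p * q) * (3 * (p * q)) := by
          gcongr; linarith
        have h2 : A ^ 2 ≤ (p * 2) ^ 2 := by gcongr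
        calc 4 * (p * q) * (A + p * q) * (4 * K * A / (p * q) ^ 2) ^ 2
            ≤ 4 * (p * q) * (3 * (p * q)) * (4 * K * A / (p * q) ^ 2) ^ 2 := by gcongr
          _ = 192 * K ^ 2 * A ^ 2 / (p * q) ^ 2 := by field_simp; ring
          _ ≤ 192 * K ^ 2 * (p * 2) ^ 2 / (p * q) ^ 2 := by gcongr
          _ = 768 * K ^ 2 * q⁻¹ * q⁻¹ := by field_simp; ring
          _ ≤ 768 * K ^ 2 * q⁻¹ * 1 := by gcongr; exact inv_le_one_of_one_le₀ hq1
          _ ≤ 784 * K ^ 2 * q⁻¹ := by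
            have : 0 ≤ K ^ 2 * q⁻¹ := by positivity
            linarith
  have hs : Summable (fun j : ℤ => 28 * K * (√(1/2)) ^ (j - m).natAbs) :=
    (((Equiv.subRight m).summable_iff (f := fun k : ℤ => (√(1/2)) ^ k.natAbs)).2 aux_sum).mul_left _
  have hsum := Summable.of_nonneg_of_le (fun j => by positivity) hterm hs
  refine ⟨hsum, ?_⟩
  refine (hsum.tsum_le_tsum hterm hs).trans ?_
  rw [tsum_mul_left]
  have := (Equiv.subRight m).tsum_eq (fun k : ℤ => (√(1/2)) ^ k.natAbs)
  simp only [Equiv.subRight_apply] at this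
  rw [this]
  linarith
end
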